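/- Let H = ℓ²(ℤ, ℂ) with standard orthonormal basis (e_k)_{k∈ℤ}, P the projection with (P f)(k) = f(k) for k > 0 and 0 otherwise, and S^m the bilateral shift S^m e_k = e_{k+m}. Set Ω(S^m,S^n) := (S^m∘P)∘(S^n∘P) − (S^n∘P)∘(S^m∘P). For all m, n, p, q ∈ ℤ, the set { k ∈ ℤ : Ω(S^m,S^n)(Ω(S^p,S^q) e_k) ≠ 0 } is finite (equivalently, the composite Ω(S^m,S^n)∘Ω(S^p,S^q) kills all but finitely many basis vectors and hence has finite rank). -/

import Mathlib

/-!
The inner commutator already annihilates all but finitely many basis vectors. If `k ≤ 0`, then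
`P e_k = 0`. If `k > 0` and also `k + p > 0`, `k + q > 0`, every projection acts as the identity
along both orders of composition, so both terms equal `e_{k+p+q}` and cancel. Hence the set lies in
the integer interval `[1, max (-p) (-q)]`.
-/

open scoped InnerProductSpace

/-- The Hilbert space `H = ℓ²(ℤ, ℂ)`. -/
noncomputable abbrev H : Type := lp (fun _ : ℤ => ℂ) 2

/-- The standard orthonormal basis vector `e k` of `ℓ²(ℤ, ℂ)`. -/
noncomputable def e (k : ℤ) : H := lp.single 2 k (1 : ℂ)

/-- A bounded operator has finite rank iff its range is a finite-dimensional subspace. -/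
def FiniteRank (T : H →L[ℂ] H) : Prop :=
  FiniteDimensional ℂ (LinearMap.range (T : H →ₗ[ℂ] H))

/-- `P` fixes `e k` for `k > 0` and annihilates it otherwise. -/
lemma proj_e (P : H →L[ℂ] H)
    (hP : ∀ (f : H) (k : ℤ), P f k = if 0 < k then f k else 0) (k : ℤ) :
    P (e k) = if 0 < k then e k else 0 := by
  ext j
  rw [hP]
  by_cases hjk : j = k
  · subst hjk
    split_ifs <;> simp
  · have hz : (e k : H) j = 0 := by simp [e, hjk]
    split_ifs <;> simp [hz]

/-- For fixed `(m,n,p,q)`, the composite `Ω(S^m,S^n) ∘ Ω(S^p,S^q)` kills all but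
finitely many basis vectors, where `Ω(S^m,S^n) = [S^m∘P, S^n∘P]`. -/
theorem omega_sq_kills_cofinitely (m n p q : ℤ) (P Sm Sn Sp Sq : H →L[ℂ] H)
    (hP : ∀ (f : H) (k : ℤ), P f k = if 0 < k then f k else 0)
    (hSm : ∀ k : ℤ, Sm (e k) = e (k + m))
    (hSn : ∀ k : ℤ, Sn (e k) = e (k + n))
    (hSp : ∀ k : ℤ, Sp (e k) = e (k + p))
    (hSq : ∀ k : ℤ, Sq (e k) = e (k + q)) :
    {k : ℤ |
      ((Sm ∘L P) ∘L (Sn ∘L P) - (Sn ∘L P) ∘L (Sm ∘L P))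
        (((Sp ∘L P) ∘L (Sq ∘L P) - (Sq ∘L P) ∘L (Sp ∘L P)) (e k)) ≠ 0}.Finite := by
  have hPe := proj_e P hP
  refine (Set.finite_Icc (1 : ℤ) (max (-p) (-q))).subset fun k hk => ?_
  by_contra hmem
  apply hk
  suffices h : ((Sp ∘L P) ∘L (Sq ∘L P) - (Sq ∘L P) ∘L (Sp ∘L P)) (e k) = 0 by
    rw [h, map_zero]
  simp only [_root_.sub_apply, ContinuousLinearMap.comp_apply]
  rcases le_or_gt k 0 with h0 | h0
  · simp [hPe, h0.not_gt]
  · have hlt : max (-p) (-q) < k := by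
      by_contra hle
      exact hmem ⟨h0, not_lt.mp hle⟩
    have hkp : 0 < k + p := by have := le_max_left (-p) (-q); omega
    have hkq : 0 < k + q := by have := le_max_right (-p) (-q); omega
    simp only [hPe, h0, hSp, hSq, hkp, hkq, if_true]
    rw [add_right_comm, sub_self]
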